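/- Let 0 ≤ j ≤ d₁−1, fix scalars (λ_u,μ_u) ≠ (0,0) in k² for 0 ≤ u ≤ j, and let (r_i, q_i)_{0 ≤ i ≤ j} be a division system up to level j. Let F, G ∈ k[X₀,X₁] be nonzero homogeneous polynomials of degrees d₁ and d₂, let R_i denote the evaluation of r_i at (F,G) for 0 ≤ i ≤ j, and let Π be a homogeneous common divisor of F and G of degree d₁−1−j such that every common divisor of F and G divides Π. Assume F(λ₀,μ₀) ≠ 0 and, for every 0 ≤ i ≤ j−1, R_i(λ_{i+1},μ_{i+1}) ≠ 0 (values at (X₀,X₁) = (λ_{i+1},μ_{i+1})). Then there is a nonzero scalar c ∈ k with R_j = c·Π. -/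

import Mathlib

/-!
The identities of a division system specialise at `(F, G)` to the steps of a Euclidean algorithm
up to linear factors: `c • A = B * Q + c' • L ^ n * R`, where the nonzero scalars `c`, `c'` are
powers of values of earlier forms (or `1`) and `L` is a linear form vanishing at a point where `B`
does not vanish. Since `L` is
irreducible and does not divide `B`, it is prime to `B`, so `A, B` and `B, R` have the same common
divisors (`dvd_pair_step`). Starting from `(G, F)`, the pairs `(F, R₀)`, `(R₀, R₁)`, …,
`(R_{j-1}, R_j)` therefore all have the common divisors of `F` and `G` (`common_dvd`).

In particular `Π` divides `R_j`, and the two are homogeneous of the same degree, so `R_j = c Π` with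
`c` a scalar. If `R_j` were `0`, the nonzero form `R_{j-1}` (or `F`, when `j = 0`), of degree one
more than that of `R_j`, would be a common divisor of `F` and `G`, hence would divide `Π`, which has
smaller degree.
-/


open MvPolynomial

noncomputable section

/-- Variables of the ring `A = k[X₀,X₁,f₀,f₁,…,g₀,g₁,…]`. -/
abbrev Avars : Type := Fin 2 ⊕ ℕ ⊕ ℕ

/-- The weights defining the trigrading of `A` (total degree in the `X`'s, in the `f`'s,
and in the `g`'s). -/
def wA : Avars → ℕ × ℕ × ℕ
  | Sum.inl _ => (1, 0, 0)
  | Sum.inr (Sum.inl _) => (0, 1, 0)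
  | Sum.inr (Sum.inr _) => (0, 0, 1)

variable (k : Type) [Field k]

/-- The variable `Xᵢ` of `A`. -/
def XA (i : Fin 2) : MvPolynomial Avars k := X (Sum.inl i)

/-- The variable `f_j` of `A`. -/
def fA (j : ℕ) : MvPolynomial Avars k := X (Sum.inr (Sum.inl j))

/-- The variable `g_j` of `A`. -/
def gA (j : ℕ) : MvPolynomial Avars k := X (Sum.inr (Sum.inr j))

/-- The generic binary form `f = ∑_{j=0}^{d₁} f_j X₀^{d₁-j} X₁^j`. -/
def fgen (d₁ : ℕ) : MvPolynomial Avars k :=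
  ∑ j ∈ Finset.range (d₁ + 1), fA k j * XA k 0 ^ (d₁ - j) * XA k 1 ^ j

/-- The generic binary form `g = ∑_{j=0}^{d₂} g_j X₀^{d₂-j} X₁^j`. -/
def ggen (d₂ : ℕ) : MvPolynomial Avars k :=
  ∑ j ∈ Finset.range (d₂ + 1), gA k j * XA k 0 ^ (d₂ - j) * XA k 1 ^ j

/-- The linear form `L_{λ,μ} = λ X₁ - μ X₀`. -/
def Lform (lam mu : k) : MvPolynomial Avars k := C lam * XA k 1 - C mu * XA k 0

/-- Substitution `X₀ ↦ λ`, `X₁ ↦ μ`, leaving the `f` and `g` variables unchanged: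
this is `a ↦ a(λ,μ)`. -/
def evalXY (lam mu : k) : MvPolynomial Avars k →ₐ[k] MvPolynomial Avars k :=
  aeval (Sum.elim (fun t : Fin 2 => if t = 0 then C lam else C mu)
    (fun j => X (Sum.inr j)))

/-- A division system up to level `j` for the degrees `(d₁, d₂)` and the scalars
`(lam u, mu u)`: a family `(r_i, q_i)_{0 ≤ i ≤ j}` of trihomogeneous elements of `A`, where
`r_i` has tridegree `(d₁-1-i, d₂-d₁+1+i, 1+i)`, satisfying the identities
`f(λ₀,μ₀)^{d₂-d₁+1}·g = f·q₀ + L_{λ₀,μ₀}^{d₂-d₁+1}·r₀`;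
`r₀(λ₁,μ₁)²·f = r₀·q₁ + f(λ₀,μ₀)^{d₂-d₁+1}·L_{λ₁,μ₁}²·r₁` (if `j ≥ 1`); and
`r_{i-1}(λ_i,μ_i)²·r_{i-2} = r_{i-1}·q_i + r_{i-2}(λ_{i-1},μ_{i-1})²·L_{λ_i,μ_i}²·r_i`
for `2 ≤ i ≤ j`. -/
def IsDivisionSystem (d₁ d₂ : ℕ) (lam mu : ℕ → k) (j : ℕ)
    (r q : ℕ → MvPolynomial Avars k) : Prop :=
  (∀ i ≤ j, IsWeightedHomogeneous wA (r i) (d₁ - 1 - i, d₂ - d₁ + 1 + i, 1 + i)) ∧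
  (∀ i ≤ j, ∃ m : ℕ × ℕ × ℕ, IsWeightedHomogeneous wA (q i) m) ∧
  ((evalXY k (lam 0) (mu 0) (fgen k d₁)) ^ (d₂ - d₁ + 1) * ggen k d₂
    = fgen k d₁ * q 0 + Lform k (lam 0) (mu 0) ^ (d₂ - d₁ + 1) * r 0) ∧
  (1 ≤ j → (evalXY k (lam 1) (mu 1) (r 0)) ^ 2 * fgen k d₁
    = r 0 * q 1 + (evalXY k (lam 0) (mu 0) (fgen k d₁)) ^ (d₂ - d₁ + 1)
        * Lform k (lam 1) (mu 1) ^ 2 * r 1) ∧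
  (∀ i, 2 ≤ i → i ≤ j → (evalXY k (lam i) (mu i) (r (i - 1))) ^ 2 * r (i - 2)
    = r (i - 1) * q i + (evalXY k (lam (i - 1)) (mu (i - 1)) (r (i - 2))) ^ 2
        * Lform k (lam i) (mu i) ^ 2 * r i)

/-- Evaluation of an element of `A` at a pair `(F, G)` of binary forms of degrees `d₁` and
`d₂`: the `k`-algebra map fixing `X₀, X₁` and sending `f_j` (resp. `g_j`) to the coefficient
of `X₀^{d₁-j}X₁^j` in `F` (resp. of `X₀^{d₂-j}X₁^j` in `G`). -/
def evalFG (d₁ d₂ : ℕ) (F G : MvPolynomial (Fin 2) k) :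
    MvPolynomial Avars k →ₐ[k] MvPolynomial (Fin 2) k :=
  aeval (Sum.elim (fun t : Fin 2 => X t)
    (Sum.elim
      (fun j => C (coeff (Finsupp.single 0 (d₁ - j) + Finsupp.single 1 j) F))
      (fun j => C (coeff (Finsupp.single 0 (d₂ - j) + Finsupp.single 1 j) G))))

/-- The value of a binary form at the point `(λ, μ)`. -/
def evalPt (lam mu : k) (P : MvPolynomial (Fin 2) k) : k :=
  eval (fun t : Fin 2 => if t = 0 then lam else mu) P

/-- `λ X₁ - μ X₀` as a binary form in `k[X₀, X₁]`. -/
def linForm {K : Type} [Field K] (a b : K) : MvPolynomial (Fin 2) K := C a * X 1 - C b * X 0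

lemma linForm_irreducible {K : Type} [Field K] {a b : K} (h : (a, b) ≠ (0, 0)) :
    Irreducible (linForm a b) := by
  have h0 : linForm a b ≠ 0 := by
    intro h0
    apply h
    have h1 := congrArg (eval (fun t : Fin 2 => if t = 0 then 0 else 1)) h0
    have h2 := congrArg (eval (fun t : Fin 2 => if t = 0 then 1 else 0)) h0
    simp [linForm] at h1 h2
    simp [h1, h2]
  have hh : (linForm a b).IsHomogeneous 1 :=
    (isHomogeneous_C_mul_X a 1).sub (isHomogeneous_C_mul_X b 0)
  refine irreducible_of_totalDegree_eq_one (hh.totalDegree h0) fun x hx => ?_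
  rw [isUnit_iff_ne_zero]
  rintro rfl
  exact h0 (MvPolynomial.ext _ _ fun m => by simpa using hx m)

lemma evalPt_linForm {K : Type} [Field K] (a b : K) : evalPt K a b (linForm a b) = 0 := by
  simp [evalPt, linForm, mul_comm]

/-- One Euclidean step preserves the set of common divisors: a divisor of `B` is prime to `L`,
because `B` does not vanish at the zero of `L`. -/
lemma dvd_pair_step {K : Type} [Field K] {a b : K} (hab : (a, b) ≠ (0, 0))
    {A B Q R : MvPolynomial (Fin 2) K} {c c' : K} (hc : c ≠ 0) (hc' : c' ≠ 0) (n : ℕ)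
    (hB : evalPt K a b B ≠ 0)
    (h : C c * A = B * Q + C c' * linForm a b ^ n * R) (D : MvPolynomial (Fin 2) K) :
    (D ∣ A ∧ D ∣ B) ↔ (D ∣ B ∧ D ∣ R) := by
  have hu : IsUnit (C c : MvPolynomial (Fin 2) K) := (isUnit_iff_ne_zero.2 hc).map C
  have hu' : IsUnit (C c' : MvPolynomial (Fin 2) K) := (isUnit_iff_ne_zero.2 hc').map C
  constructor
  · rintro ⟨h1, h2⟩
    refine ⟨h2, ?_⟩
    have h3 : D ∣ C c' * (linForm a b ^ n * R) := by
      rw [← mul_assoc]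
      exact (dvd_add_right (h2.mul_right Q)).1 (h ▸ h1.mul_left (C c))
    have hrel : IsRelPrime (linForm a b) D := by
      rw [(linForm_irreducible hab).isRelPrime_iff_not_dvd]
      intro hL
      obtain ⟨E, rfl⟩ := hL.trans h2
      have h0 := evalPt_linForm a b
      rw [evalPt] at h0 hB
      rw [map_mul, h0, zero_mul] at hB
      exact hB rfl
    exact hrel.symm.pow_right.dvd_of_dvd_mul_left (hu'.dvd_mul_left.1 h3)
  · rintro ⟨h1, h2⟩
    exact ⟨hu.dvd_mul_left.1 (h ▸ dvd_add (h1.mul_right Q) (h2.mul_left _)), h1⟩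

lemma evalFG_evalXY {K : Type} [Field K] (d₁ d₂ : ℕ) (F G : MvPolynomial (Fin 2) K) (a b : K)
    (p : MvPolynomial Avars K) :
    evalFG K d₁ d₂ F G (evalXY K a b p) = C (evalPt K a b (evalFG K d₁ d₂ F G p)) := by
  have : (evalFG K d₁ d₂ F G).comp (evalXY K a b) =
      ((Algebra.ofId K (MvPolynomial (Fin 2) K)).comp
        (aeval (fun t : Fin 2 => if t = 0 then a else b))).comp (evalFG K d₁ d₂ F G) := by
    apply MvPolynomial.algHom_ext
    rintro (t | t | t)
    · by_cases ht : t = 0 <;>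
        simp [evalFG, evalXY, ht, Algebra.ofId_apply, MvPolynomial.algebraMap_eq]
    · simp [evalFG, evalXY, Algebra.ofId_apply, MvPolynomial.algebraMap_eq]
    · simp [evalFG, evalXY, Algebra.ofId_apply, MvPolynomial.algebraMap_eq]
  exact DFunLike.congr_fun this p

lemma evalFG_Lform {K : Type} [Field K] (d₁ d₂ : ℕ) (F G : MvPolynomial (Fin 2) K) (a b : K) :
    evalFG K d₁ d₂ F G (Lform K a b) = linForm a b := by
  simp [evalFG, Lform, linForm, XA, MvPolynomial.algebraMap_eq]

/-- A binary form of degree `d` is determined by its coefficients at `X₀^{d-j} X₁^j`. -/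
lemma sum_coeff_eq {K : Type} [Field K] {d : ℕ} {F : MvPolynomial (Fin 2) K}
    (hF : F.IsHomogeneous d) :
    ∑ j ∈ Finset.range (d + 1),
      C (coeff (Finsupp.single 0 (d - j) + Finsupp.single 1 j) F) * X 0 ^ (d - j) * X 1 ^ j
      = F := by
  have hmon : ∀ j, (C (coeff (Finsupp.single 0 (d - j) + Finsupp.single 1 j) F) :
      MvPolynomial (Fin 2) K) * X 0 ^ (d - j) * X 1 ^ j = monomial (Finsupp.single 0 (d - j) + Finsupp.single 1 j)
        (coeff (Finsupp.single 0 (d - j) + Finsupp.single 1 j) F) := by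
    intro j
    rw [monomial_eq, Finsupp.prod_fintype _ _ (by simp)]
    simp [mul_assoc, -Finsupp.single_tsub]
  simp only [hmon]
  ext m
  rw [coeff_sum]
  by_cases hm : m 0 + m 1 = d
  · have key : ∀ j ∈ Finset.range (d + 1),
        (Finsupp.single 0 (d - j) + Finsupp.single 1 j = m ↔ j = m 1) := by
      intro j hj
      constructor
      · rintro rfl
        simp
      · rintro rfl
        ext t
        fin_cases t
        · simp; omega
        · simp
    have h1 : Finsupp.single 0 (d - m 1) + Finsupp.single 1 (m 1) = m :=
      (key (m 1) (by simp; omega)).2 rfl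
    rw [Finset.sum_eq_single (m 1)]
    · rw [h1]; simp
    · intro j hj hne
      rw [coeff_monomial, if_neg (fun h => hne ((key j hj).1 h))]
    · intro h
      exact absurd (Finset.mem_range.2 (by omega)) h
  · rw [hF.coeff_eq_zero (by rw [Finsupp.degree_eq_sum]; simpa using hm)]
    refine Finset.sum_eq_zero fun j hj => ?_
    rw [coeff_monomial, if_neg]
    rintro rfl
    apply hm
    have := Finset.mem_range.1 hj
    simp; omega

lemma evalFG_fgen {K : Type} [Field K] (d₁ d₂ : ℕ) {F G : MvPolynomial (Fin 2) K}
    (hF : F.IsHomogeneous d₁) : evalFG K d₁ d₂ F G (fgen K d₁) = F := by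
  conv_rhs => rw [← sum_coeff_eq hF]
  simp [evalFG, fgen, fA, XA]

lemma evalFG_ggen {K : Type} [Field K] (d₁ d₂ : ℕ) {F G : MvPolynomial (Fin 2) K}
    (hG : G.IsHomogeneous d₂) : evalFG K d₁ d₂ F G (ggen K d₂) = G := by
  conv_rhs => rw [← sum_coeff_eq hG]
  simp [evalFG, ggen, gA, XA]

/-- Evaluation at `(F, G)` preserves the degree in `X₀, X₁`, the `f_j` and `g_j` becoming
scalars. -/
lemma evalFG_isHomogeneous {K : Type} [Field K] (d₁ d₂ : ℕ) (F G : MvPolynomial (Fin 2) K)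
    {p : MvPolynomial Avars K} {n : ℕ × ℕ × ℕ} (hp : IsWeightedHomogeneous wA p n) :
    (evalFG K d₁ d₂ F G p).IsHomogeneous n.1 := by
  rw [evalFG, aeval_def, eval₂_eq]
  refine IsHomogeneous.sum _ _ _ fun m hm => ?_
  have hw : ∑ v ∈ m.support, (wA v).1 * m v = n.1 := by
    rw [← hp (mem_support_iff.1 hm), Finsupp.weight_apply, Finsupp.sum, Prod.fst_sum]
    exact Finset.sum_congr rfl fun v _ => by simp [mul_comm]
  rw [← hw, MvPolynomial.algebraMap_eq]
  refine IsHomogeneous.C_mul (IsHomogeneous.prod _ _ _ fun v _ => IsHomogeneous.pow ?_ _) _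
  rcases v with t | t | t
  · exact isHomogeneous_X _ _
  · exact isHomogeneous_C _ _
  · exact isHomogeneous_C _ _

/-- The form preceding `R i` in the sequence `F, R 0, R 1, …`. -/
def prevForm {K : Type} [Field K] (F : MvPolynomial (Fin 2) K)
    (R : ℕ → MvPolynomial (Fin 2) K) : ℕ → MvPolynomial (Fin 2) K
  | 0 => F
  | i + 1 => R i

/-- Consecutive forms in the remainder sequence have the same common divisors as `F` and `G`. -/
lemma common_dvd {K : Type} [Field K] {d₁ d₂ j : ℕ} {lam mu : ℕ → K}
    (hlm : ∀ u ≤ j, (lam u, mu u) ≠ (0, 0)) {r q : ℕ → MvPolynomial Avars K}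
    (hds : IsDivisionSystem K d₁ d₂ lam mu j r q) {F G : MvPolynomial (Fin 2) K}
    (hF : F.IsHomogeneous d₁) (hG : G.IsHomogeneous d₂)
    (hne : ∀ i ≤ j, evalPt K (lam i) (mu i)
      (prevForm F (fun i => evalFG K d₁ d₂ F G (r i)) i) ≠ 0)
    (D : MvPolynomial (Fin 2) K) (i : ℕ) (hi : i ≤ j) :
    (D ∣ F ∧ D ∣ G) ↔
      (D ∣ prevForm F (fun i => evalFG K d₁ d₂ F G (r i)) i ∧ D ∣ evalFG K d₁ d₂ F G (r i)) := by
  obtain ⟨-, -, h0, h1, h2⟩ := hds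
  induction i with
  | zero =>
    rw [and_comm]
    have e := congrArg (evalFG K d₁ d₂ F G) h0
    simp only [map_mul, map_add, map_pow, evalFG_evalXY, evalFG_fgen _ _ hF, evalFG_ggen _ _ hG,
      evalFG_Lform] at e
    have hF0 : evalPt K (lam 0) (mu 0) F ≠ 0 := hne 0 hi
    refine dvd_pair_step (hlm 0 hi) (Q := evalFG K d₁ d₂ F G (q 0)) (c' := 1) (pow_ne_zero (d₂ - d₁ + 1) hF0) one_ne_zero
      (d₂ - d₁ + 1) hF0 ?_ D
    simpa using e
  | succ i ih =>
    rw [ih (by omega)]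
    have hR := hne (i + 1) hi
    have hp := hne i (by omega)
    rcases i with _ | i
    · have e := congrArg (evalFG K d₁ d₂ F G) (h1 hi)
      simp only [map_mul, map_add, map_pow, evalFG_evalXY, evalFG_fgen _ _ hF,
        evalFG_Lform] at e
      refine dvd_pair_step (hlm 1 hi) (Q := evalFG K d₁ d₂ F G (q 1)) (pow_ne_zero 2 hR)
        (pow_ne_zero (d₂ - d₁ + 1) hp) 2 hR ?_ D
      simpa [prevForm] using e
    · have e := congrArg (evalFG K d₁ d₂ F G) (h2 (i + 1 + 1) (by omega) hi)
      simp only [map_mul, map_add, map_pow, evalFG_evalXY, evalFG_Lform] at e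
      refine dvd_pair_step (hlm _ hi) (Q := evalFG K d₁ d₂ F G (q (i + 1 + 1)))
        (pow_ne_zero 2 hR) (pow_ne_zero 2 hp) 2 hR ?_ D
      simpa [prevForm] using e

/-- Let `(r_i, q_i)_{0 ≤ i ≤ j}` be a division system up to level `j`, let
`F, G` be nonzero binary forms of degrees `d₁, d₂`, let `R_i` be the evaluation of `r_i` at
`(F, G)`, and let `Π` be a homogeneous common divisor of `F` and `G` of degree `d₁-1-j` such
that every common divisor of `F` and `G` divides `Π`. If `F(λ₀,μ₀) ≠ 0` and
`R_i(λ_{i+1},μ_{i+1}) ≠ 0` for all `0 ≤ i ≤ j-1`, then `R_j = c·Π` for some nonzero scalar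
`c`. -/
theorem statement9 [IsAlgClosed k] (d₁ d₂ : ℕ) (hd₁ : 1 ≤ d₁) (hd : d₁ < d₂)
    (j : ℕ) (hj : j ≤ d₁ - 1) (lam mu : ℕ → k)
    (hlm : ∀ u ≤ j, (lam u, mu u) ≠ (0, 0))
    (r q : ℕ → MvPolynomial Avars k)
    (hds : IsDivisionSystem k d₁ d₂ lam mu j r q)
    (F G : MvPolynomial (Fin 2) k) (hF0 : F ≠ 0) (hG0 : G ≠ 0)
    (hF : F.IsHomogeneous d₁) (hG : G.IsHomogeneous d₂)
    (Pi : MvPolynomial (Fin 2) k) (hPi : Pi.IsHomogeneous (d₁ - 1 - j))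
    (hPiF : Pi ∣ F) (hPiG : Pi ∣ G)
    (hPigcd : ∀ D : MvPolynomial (Fin 2) k, D ∣ F → D ∣ G → D ∣ Pi)
    (hFne : evalPt k (lam 0) (mu 0) F ≠ 0)
    (hRne : ∀ i < j, evalPt k (lam (i + 1)) (mu (i + 1)) (evalFG k d₁ d₂ F G (r i)) ≠ 0) :
    ∃ c : k, c ≠ 0 ∧ evalFG k d₁ d₂ F G (r j) = C c * Pi := by
  set R : ℕ → MvPolynomial (Fin 2) k := fun i => evalFG k d₁ d₂ F G (r i) with hR
  have hne : ∀ i ≤ j, evalPt k (lam i) (mu i) (prevForm F R i) ≠ 0 := by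
    rintro (_ | i) hi
    · exact hFne
    · exact hRne i hi
  have hcd := fun D => common_dvd hlm hds hF hG hne D j le_rfl
  have hRhom : ∀ i ≤ j, (R i).IsHomogeneous (d₁ - 1 - i) := fun i hi =>
    evalFG_isHomogeneous d₁ d₂ F G (hds.1 i hi)
  have hPi0 : Pi ≠ 0 := ne_zero_of_dvd_ne_zero hF0 hPiF
  have hprev0 : prevForm F R j ≠ 0 := by
    intro h
    apply hne j le_rfl
    rw [h, evalPt, map_zero]
  have hprevdeg : (prevForm F R j).IsHomogeneous (d₁ - j) := by
    rcases j with _ | i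
    · exact hF
    · have := hRhom i (by omega)
      rwa [show d₁ - 1 - i = d₁ - (i + 1) by omega] at this
  have hRj0 : R j ≠ 0 := by
    intro h0
    obtain ⟨h1, h2⟩ := (hcd (prevForm F R j)).2 ⟨dvd_rfl, by
      change _ ∣ R j
      rw [h0]
      exact dvd_zero _⟩
    obtain ⟨T, hT⟩ := hPigcd _ h1 h2
    have hT0 : T ≠ 0 := by
      rintro rfl
      exact hPi0 (by rw [hT, mul_zero])
    have hdeg := congrArg totalDegree hT
    rw [totalDegree_mul_of_isDomain hprev0 hT0, hPi.totalDegree hPi0,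
      hprevdeg.totalDegree hprev0] at hdeg
    omega
  obtain ⟨T, hT⟩ : Pi ∣ R j := ((hcd Pi).1 ⟨hPiF, hPiG⟩).2
  have hT0 : T ≠ 0 := by
    rintro rfl
    exact hRj0 (by rw [hT, mul_zero])
  have hdeg := congrArg totalDegree hT
  rw [totalDegree_mul_of_isDomain hPi0 hT0, hPi.totalDegree hPi0,
    (hRhom j le_rfl).totalDegree hRj0] at hdeg
  have hTC := totalDegree_eq_zero_iff_eq_C.1 (show T.totalDegree = 0 by omega)
  refine ⟨coeff 0 T, fun h => hT0 (by rw [hTC, h, C_0]), ?_⟩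
  rw [← hTC, mul_comm]
  exact hT

end
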